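/- Let f : S → ℂ be a non-zero solution of the integral Van Vleck equation. Then Σ_{i∈I} Σ_{j∈I} c_i c_j f(z_i z_j) = 0 and Σ_{i∈I} Σ_{j∈I} c_i c_j f(τ(z_i) z_j) = 0. -/

import Mathlib

/-!
The equation is bilinear in `(x, y)` once `f` is extended linearly to the semigroup algebra `R[S]`,
where `μ = ∑ i, c i • δ (z i)` becomes a single central element `m` and convolution with `μ` becomes
multiplication by `m`. So it is enough to treat a point mass, in an arbitrary semigroup, for
`f (x * τ y * m) - f (x * y * m) = 2 * f x * f y`.

There `f ∘ τ = -f`, and `w = τ m * m` is fixed by `τ`, whence `f w = 0`. Since `w` is also central,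
multiplying `x` or `y` by `w` has the same effect on the left-hand side, so
`f (x * w) * f y = f x * f (y * w)`. As `f (x * w) - f (x * (m * m))` is a multiple of `f x`, the
same symmetry holds with `m * m` in place of `w`. If `f (m * m)` were non-zero, these two symmetries
would force `f` to vanish on all `x * w`, then at `m`, then on all `x * (m * m)`, and finally
everywhere.
-/

open MonoidAlgebra

/-- `τ` is an involution of the semigroup `S` in the sense of functional equations:
an anti-automorphism of order at most two. -/
structure IsAntiInvolution {S : Type*} [Mul S] (τ : S → S) : Prop where
  involutive : Function.Involutive τ
  map_mul (x y : S) : τ (x * y) = τ y * τ x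

/-- `f` solves the Van Vleck equation in which the integrating measure is the point mass at `m`. -/
def IsVanVleckSolution {S R : Type*} [Mul S] [Ring R] (τ : S → S) (m : S) (f : S → R) : Prop :=
  ∀ x y, f (x * τ y * m) - f (x * y * m) = 2 * f x * f y

theorem IsAntiInvolution.commute_apply {S : Type*} [Mul S] {τ : S → S} (hτ : IsAntiInvolution τ)
    {m : S} (hm : ∀ x, Commute m x) (x : S) : Commute (τ m) x := by
  have h := congrArg τ (hm (τ x)).eq
  rw [hτ.map_mul, hτ.map_mul, hτ.involutive] at h
  exact h.symm

theorem IsAntiInvolution.commute_apply_mul_self {S : Type*} [Semigroup S] {τ : S → S}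
    (hτ : IsAntiInvolution τ) {m : S} (hm : ∀ x, Commute m x) (x : S) : Commute (τ m * m) x :=
  (hτ.commute_apply hm x).mul_left (hm x)

theorem IsAntiInvolution.map_apply_mul_self {S : Type*} [Mul S] {τ : S → S}
    (hτ : IsAntiInvolution τ) (m : S) : τ (τ m * m) = τ m * m := by
  rw [hτ.map_mul, hτ.involutive]

namespace IsVanVleckSolution

section Mul

variable {S R : Type*} [Mul S] [CommRing R] [NoZeroDivisors R] [NeZero (2 : R)]
  {τ : S → S} {m : S} {f : S → R}

theorem apply_involution (hf : IsVanVleckSolution τ m f) (hτ : Function.Involutive τ) (y : S) :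
    f (τ y) = -f y := by
  have mul_add_eq_zero (x : S) : f x * (f (τ y) + f y) = 0 := by
    have h := hf x (τ y)
    rw [hτ] at h
    apply mul_left_cancel₀ (two_ne_zero (α := R))
    linear_combination -h - hf x y
  have sq_eq_zero : (f (τ y) + f y) ^ 2 = 0 := by
    linear_combination mul_add_eq_zero (τ y) + mul_add_eq_zero y
  exact eq_neg_of_add_eq_zero_left (pow_eq_zero_iff two_ne_zero |>.mp sq_eq_zero)

theorem apply_involution_mul_self (hf : IsVanVleckSolution τ m f) (hτ : IsAntiInvolution τ) :
    f (τ m * m) = 0 := by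
  have h := hf.apply_involution hτ.involutive (τ m * m)
  rw [hτ.map_apply_mul_self] at h
  apply mul_left_cancel₀ (two_ne_zero (α := R))
  linear_combination h

end Mul

section Semigroup

variable {S R : Type*} [Semigroup S] [CommRing R] {τ : S → S} {m : S} {f : S → R}

theorem apply_mul_involution_mul_self_sub (hf : IsVanVleckSolution τ m f) (x : S) :
    f (x * (τ m * m)) - f (x * (m * m)) = 2 * f x * f m := by
  simpa only [mul_assoc] using hf x m

variable [NoZeroDivisors R] [NeZero (2 : R)]

theorem apply_mul_fixed_comm (hf : IsVanVleckSolution τ m f) (hτ : IsAntiInvolution τ) {w : S}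
    (hw : ∀ x, Commute w x) (hτw : τ w = w) (x y : S) :
    f (x * w) * f y = f x * f (y * w) := by
  have left_eq : x * w * τ y * m = x * τ (y * w) * m := by rw [hτ.map_mul, hτw, ← mul_assoc]
  have right_eq : x * w * y * m = x * (y * w) * m := by rw [mul_assoc x, (hw y).eq]
  have h₁ := hf (x * w) y
  have h₂ := hf x (y * w)
  rw [left_eq, right_eq] at h₁
  apply mul_left_cancel₀ (two_ne_zero (α := R))
  linear_combination h₂ - h₁

theorem apply_mul_mul_self_comm (hf : IsVanVleckSolution τ m f) (hτ : IsAntiInvolution τ)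
    (hm : ∀ x, Commute m x) (x y : S) :
    f (x * (m * m)) * f y = f x * f (y * (m * m)) := by
  have fixed_comm :=
    hf.apply_mul_fixed_comm hτ (hτ.commute_apply_mul_self hm) (hτ.map_apply_mul_self m) x y
  linear_combination fixed_comm - f y * hf.apply_mul_involution_mul_self_sub x +
    f x * hf.apply_mul_involution_mul_self_sub y

theorem apply_mul_self_mul_eq_zero (hf : IsVanVleckSolution τ m f) (hτ : IsAntiInvolution τ)
    (hm : ∀ x, Commute m x) (y : S) : f (m * m) * f (y * (τ m * m)) = 0 := by
  have hw := hτ.commute_apply_mul_self hm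
  calc f (m * m) * f (y * (τ m * m))
      = f (m * m * (τ m * m)) * f y :=
        (hf.apply_mul_fixed_comm hτ hw (hτ.map_apply_mul_self m) _ _).symm
    _ = f (τ m * m * (m * m)) * f y := by rw [(hw (m * m)).eq]
    _ = f (τ m * m) * f (y * (m * m)) := hf.apply_mul_mul_self_comm hτ hm _ _
    _ = 0 := by rw [hf.apply_involution_mul_self hτ, zero_mul]

theorem eq_zero_of_apply_mul_involution_mul_self (hf : IsVanVleckSolution τ m f)
    (hτ : IsAntiInvolution τ) (hm : ∀ x, Commute m x) (vanish : ∀ x, f (x * (τ m * m)) = 0) :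
    f = 0 := by
  have apply_m : f m = 0 := by
    have apply_mul_mul_self : f (τ m * (m * m)) = 0 := by
      rw [← mul_assoc, ← (hm (τ m * m)).eq, vanish]
    have h := hf.apply_mul_involution_mul_self_sub (τ m)
    rw [vanish, apply_mul_mul_self, hf.apply_involution hτ.involutive] at h
    simpa [NeZero.ne (2 : R)] using h
  have apply_mul_mul_self (x : S) : f (x * (m * m)) = 0 := by
    linear_combination vanish x - hf.apply_mul_involution_mul_self_sub x - 2 * f x * apply_m
  have apply_mul_m (x : S) : f (x * m) = 0 := by
    have shift (y : S) : x * m * y * m = x * y * (m * m) := by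
      rw [mul_assoc x, (hm y).eq]; simp only [mul_assoc]
    have h := hf (x * m) (x * m)
    rw [shift, shift, apply_mul_mul_self, apply_mul_mul_self] at h
    simpa [NeZero.ne (2 : R)] using h
  funext x
  have h := hf x x
  rw [apply_mul_m, apply_mul_m] at h
  simpa [NeZero.ne (2 : R)] using h

theorem apply_mul_self (hf : IsVanVleckSolution τ m f) (hτ : IsAntiInvolution τ)
    (hm : ∀ x, Commute m x) : f (m * m) = 0 := by
  by_contra hne
  have vanish (y : S) : f (y * (τ m * m)) = 0 :=
    (mul_eq_zero.mp (hf.apply_mul_self_mul_eq_zero hτ hm y)).resolve_left hne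
  exact hne (congrFun (hf.eq_zero_of_apply_mul_involution_mul_self hτ hm vanish) (m * m))

end Semigroup

end IsVanVleckSolution

section SemigroupAlgebra

variable {S R : Type*} [CommSemiring R]

/-- The extension of `f : S → R` to an `R`-linear functional on `R[S]`. Its value at
`∑ i, single (z i) (c i)` is the integral of `f` against the measure `∑ i, c i • δ (z i)`. -/
noncomputable def linearExtension (f : S → R) : R[S] →ₗ[R] R :=
  Finsupp.linearCombination R f ∘ₗ (coeffLinearEquiv R).toLinearMap

@[simp]
theorem linearExtension_single (f : S → R) (s : S) (r : R) :
    linearExtension f (single s r) = r * f s := by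
  simp [linearExtension]

variable [Mul S] {τ : S → S}

theorem linearExtension_sum_mul_sum {ι κ : Type*} (f : S → R) (I : Finset ι) (J : Finset κ)
    (c : ι → R) (d : κ → R) (x : ι → S) (y : κ → S) :
    linearExtension f ((∑ i ∈ I, single (x i) (c i)) * ∑ j ∈ J, single (y j) (d j)) =
      ∑ i ∈ I, ∑ j ∈ J, c i * d j * f (x i * y j) := by
  simp only [Finset.sum_mul_sum, single_mul_single, map_sum, linearExtension_single]

theorem IsAntiInvolution.mapDomain (hτ : IsAntiInvolution τ) :
    IsAntiInvolution (mapDomain τ : R[S] → R[S]) where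
  involutive a := by
    induction a using MonoidAlgebra.induction_linear with
    | zero => simp only [mapDomain_zero]
    | add a b ha hb => rw [mapDomain_add, mapDomain_add, ha, hb]
    | single s r => rw [mapDomain_single, mapDomain_single, hτ.involutive]
  map_mul a b := by
    induction a using MonoidAlgebra.induction_linear with
    | zero => simp only [zero_mul, mul_zero, mapDomain_zero]
    | add a a' ha ha' => rw [add_mul, mapDomain_add, mapDomain_add, mul_add, ha, ha']
    | single s r =>
      induction b using MonoidAlgebra.induction_linear with
      | zero => simp only [zero_mul, mul_zero, mapDomain_zero]
      | add b b' hb hb' => rw [mul_add, mapDomain_add, mapDomain_add, add_mul, hb, hb']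
      | single t q =>
        simp only [single_mul_single, mapDomain_single, hτ.map_mul, mul_comm r]

theorem commute_sum_single {ι : Type*} {I : Finset ι} {c : ι → R} {z : ι → S}
    (hz : ∀ i ∈ I, ∀ s, Commute (z i) s) (a : R[S]) :
    Commute (∑ i ∈ I, single (z i) (c i)) a := by
  refine Commute.sum_left I _ a fun i hi => ?_
  induction a using MonoidAlgebra.induction_linear with
  | zero => exact Commute.zero_right _
  | add a b ha hb => exact ha.add_right hb
  | single s r => exact single_commute_single (hz i hi s) (mul_comm _ _)

theorem IsVanVleckSolution.of_single {R : Type*} [CommRing R] {μ : R[S]} {F : R[S] →ₗ[R] R}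
    (h : ∀ x y : S, F (single (x * τ y) 1 * μ) - F (single (x * y) 1 * μ) =
      2 * F (single x 1) * F (single y 1)) :
    IsVanVleckSolution (mapDomain τ) μ F := by
  intro a b
  induction a using MonoidAlgebra.induction_linear with
  | zero => simp only [zero_mul, mul_zero, map_zero, sub_zero]
  | add a a' ha ha' =>
    simp only [add_mul, map_add]
    linear_combination ha + ha'
  | single s r =>
    induction b using MonoidAlgebra.induction_linear with
    | zero => simp only [zero_mul, mul_zero, mapDomain_zero, map_zero, sub_zero]
    | add b b' hb hb' =>
      simp only [mapDomain_add, add_mul, mul_add, map_add]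
      linear_combination hb + hb'
    | single t q =>
      have apply_smul (u : S) : F (single u (r * q) * μ) = r * q * F (single u 1 * μ) := by
        rw [← mul_one (r * q), ← smul_single', smul_mul_assoc, map_smul, smul_eq_mul, mul_one]
      have apply_single (u : S) (k : R) : F (single u k) = k * F (single u 1) := by
        rw [← smul_eq_mul, ← map_smul, smul_single', mul_one]
      rw [mapDomain_single, single_mul_single, single_mul_single, apply_smul, apply_smul,
        apply_single s, apply_single t]
      linear_combination r * q * h s t

end SemigroupAlgebra

theorem stmt_2_general {S R ι : Type*} [Semigroup S] [CommRing R] [NoZeroDivisors R]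
    [NeZero (2 : R)] (τ : S → S) (hτmul : ∀ x y : S, τ (x * y) = τ y * τ x)
    (hτinv : ∀ x : S, τ (τ x) = x) (I : Finset ι) (c : ι → R) (z : ι → S)
    (hz : ∀ i ∈ I, ∀ s : S, z i * s = s * z i) (f : S → R)
    (hVV : ∀ x y : S, (∑ i ∈ I, c i * f (x * τ y * z i)) - (∑ i ∈ I, c i * f (x * y * z i)) =
      2 * f x * f y) :
    (∑ i ∈ I, ∑ j ∈ I, c i * c j * f (z i * z j)) = 0 ∧
    (∑ i ∈ I, ∑ j ∈ I, c i * c j * f (τ (z i) * z j)) = 0 := by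
  set μ : R[S] := ∑ i ∈ I, single (z i) (c i) with hμ
  have hτ : IsAntiInvolution (mapDomain τ : R[S] → R[S]) := .mapDomain ⟨hτinv, hτmul⟩
  have hF : IsVanVleckSolution (mapDomain τ) μ (linearExtension f) := .of_single fun x y => by
    simpa [hμ, Finset.mul_sum, single_mul_single] using hVV x y
  have mapDomain_μ : mapDomain τ μ = ∑ i ∈ I, single (τ (z i)) (c i) := by
    change mapDomainLinearMap R R τ μ = _
    simp only [hμ, map_sum, mapDomainLinearMap_single]
  rw [← linearExtension_sum_mul_sum, ← linearExtension_sum_mul_sum, ← mapDomain_μ, ← hμ]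
  exact ⟨hF.apply_mul_self hτ (commute_sum_single hz), hF.apply_involution_mul_self hτ⟩

theorem stmt_2 {S ι : Type*} [Semigroup S] (τ : S → S)
    (hτmul : ∀ x y : S, τ (x * y) = τ y * τ x)
    (hτinv : ∀ x : S, τ (τ x) = x)
    (I : Finset ι) (c : ι → ℂ) (z : ι → S)
    (hz : ∀ i ∈ I, ∀ s : S, z i * s = s * z i)
    (f : S → ℂ) (hf : f ≠ 0)
(hVV : ∀ x y : S,
      (∑ i ∈ I, c i * f (x * τ y * z i)) - (∑ i ∈ I, c i * f (x * y * z i))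
        = 2 * f x * f y) :
    (∑ i ∈ I, ∑ j ∈ I, c i * c j * f (z i * z j)) = 0 ∧
    (∑ i ∈ I, ∑ j ∈ I, c i * c j * f (τ (z i) * z j)) = 0 :=
  stmt_2_general τ hτmul hτinv I c z hz f hVV
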